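/- arXiv:2208.04472 — 2 statements merged into one kernel-verified Lean document; each statement's English description precedes it below -/
import Mathlib

section
/- Let 0 < λ. Then the second moment of the KdV wave field in the genus-0 soliton condensate equals λ⁴; explicitly, (16/3)·∫₀^λ η³ · (η/(π·√(λ² − η²))) dη = λ⁴. Consequently, together with ⟨φ⟩ = λ², the variance ⟨φ²⟩ − ⟨φ⟩² of the genus-0 condensate wave field vanishes. -/
/-!
On `(0, λ)` both integrands have elementary antiderivatives, built from `arcsin (η / λ)` and
`√(λ² - η²)`, that are continuous on `[0, λ]`. The integrands are nonnegative, so the singularity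
at `η = λ` is integrable and the fundamental theorem of calculus gives
`∫₀^λ η² / √(λ² - η²) = π λ² / 4` and `∫₀^λ η⁴ / √(λ² - η²) = 3 π λ⁴ / 16`.
-/

/-- Fundamental theorem of calculus on `[0, b]` for a nonnegative, possibly unbounded, derivative:
integrability comes from nonnegativity. -/
lemma integral_of_nonneg_deriv {F f : ℝ → ℝ} {b : ℝ} (hb : 0 ≤ b) (hF : Continuous F)
    (hd : ∀ x ∈ Set.Ioo 0 b, HasDerivAt F (f x) x) (hf : ∀ x ∈ Set.Ioo 0 b, 0 ≤ f x) :
    ∫ x in (0:ℝ)..b, f x = F b - F 0 := by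
  apply intervalIntegral.integral_eq_sub_of_hasDerivAt_of_le hb hF.continuousOn hd
  apply intervalIntegral.intervalIntegrable_deriv_of_nonneg hF.continuousOn
  · simpa [hb] using hd
  · simpa [hb] using hf

lemma hasDerivAt_sqrt_sq_sub_sq {lam x : ℝ} (hx : x ∈ Set.Ioo 0 lam) :
    HasDerivAt (fun y => Real.sqrt (lam ^ 2 - y ^ 2)) (-x / Real.sqrt (lam ^ 2 - x ^ 2)) x := by
  have hpos : 0 < lam ^ 2 - x ^ 2 := by nlinarith [hx.1, hx.2]
  have hs := Real.sqrt_pos.2 hpos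
  refine (((hasDerivAt_pow 2 x).const_sub (lam ^ 2)).sqrt hpos.ne').congr_deriv ?_
  simp
  field_simp

lemma hasDerivAt_arcsin_div {lam x : ℝ} (hx : x ∈ Set.Ioo 0 lam) :
    HasDerivAt (fun y => Real.arcsin (y / lam)) (1 / Real.sqrt (lam ^ 2 - x ^ 2)) x := by
  have hl : 0 < lam := hx.1.trans hx.2
  have h1 : x / lam < 1 := (div_lt_one hl).2 hx.2
  have h0 : 0 < x / lam := div_pos hx.1 hl
  have h := (Real.hasDerivAt_arcsin (x := x / lam) (by linarith) h1.ne).comp x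
    ((hasDerivAt_id x).div_const lam)
  have e : Real.sqrt (lam ^ 2 - x ^ 2) = lam * Real.sqrt (1 - (x / lam) ^ 2) := by
    rw [← Real.sqrt_sq hl.le, ← Real.sqrt_mul (by positivity), Real.sqrt_sq hl.le]
    congr 1
    field_simp
  refine h.congr_deriv ?_
  rw [e]
  field_simp

lemma integral_mean {lam : ℝ} (hlam : 0 < lam) :
    ∫ η in (0:ℝ)..lam, η * (η / (Real.pi * Real.sqrt (lam ^ 2 - η ^ 2))) = lam ^ 2 / 4 := by
  have hpi := Real.pi_pos
  rw [integral_of_nonneg_deriv (F := fun y => (lam ^ 2 / 2 * Real.arcsin (y / lam)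
    - y / 2 * Real.sqrt (lam ^ 2 - y ^ 2)) / Real.pi) hlam.le]
  · simp [hlam.ne']
    field_simp
    norm_num
  · fun_prop
  · intro x hx
    have hpos : 0 < lam ^ 2 - x ^ 2 := by nlinarith [hx.1, hx.2]
    have hs := Real.sqrt_pos.2 hpos
    have hsq := Real.sq_sqrt hpos.le
    refine ((((hasDerivAt_arcsin_div hx).const_mul (lam ^ 2 / 2)).sub
      (((hasDerivAt_id x).div_const 2).mul (hasDerivAt_sqrt_sq_sub_sq hx))).div_const
      Real.pi).congr_deriv ?_
    simp only [id]
    field_simp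
    rw [hsq]
    ring
  · intro x hx
    have := hx.1
    positivity

lemma integral_second_moment {lam : ℝ} (hlam : 0 < lam) :
    ∫ η in (0:ℝ)..lam, η ^ 3 * (η / (Real.pi * Real.sqrt (lam ^ 2 - η ^ 2)))
      = 3 * lam ^ 4 / 16 := by
  have hpi := Real.pi_pos
  rw [integral_of_nonneg_deriv (F := fun y => (3 * lam ^ 4 / 8 * Real.arcsin (y / lam)
    - (3 * lam ^ 2 / 8 * y + y ^ 3 / 4) * Real.sqrt (lam ^ 2 - y ^ 2)) / Real.pi) hlam.le]
  · simp [hlam.ne']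
    field_simp
    norm_num
  · fun_prop
  · intro x hx
    have hpos : 0 < lam ^ 2 - x ^ 2 := by nlinarith [hx.1, hx.2]
    have hs := Real.sqrt_pos.2 hpos
    have hsq := Real.sq_sqrt hpos.le
    refine ((((hasDerivAt_arcsin_div hx).const_mul (3 * lam ^ 4 / 8)).sub
      ((((hasDerivAt_id x).const_mul (3 * lam ^ 2 / 8)).add
        ((hasDerivAt_pow 3 x).div_const 4)).mul
        (hasDerivAt_sqrt_sq_sub_sq hx))).div_const Real.pi).congr_deriv ?_
    simp
    field_simp
    rw [hsq]
    ring
  · intro x hx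
    have := hx.1
    positivity


/-- The second moment of the KdV wave field in the genus-0 soliton condensate equals `λ⁴`,
and consequently (together with mean `λ²`) the variance vanishes. -/
theorem genus0_condensate_second_moment_and_variance (lam : ℝ) (hlam : 0 < lam) :
    (16 / 3) * (∫ η in (0:ℝ)..lam,
        η ^ 3 * (η / (Real.pi * Real.sqrt (lam ^ 2 - η ^ 2)))) = lam ^ 4 ∧
    (16 / 3) * (∫ η in (0:ℝ)..lam,
        η ^ 3 * (η / (Real.pi * Real.sqrt (lam ^ 2 - η ^ 2)))) -
      (4 * ∫ η in (0:ℝ)..lam, η * (η / (Real.pi * Real.sqrt (lam ^ 2 - η ^ 2)))) ^ 2 = 0 := by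
  rw [integral_mean hlam, integral_second_moment hlam]
  constructor <;> ring
end

section
/- Let 0 < λ and let η ∈ (0, λ). Then the tracer velocity s(ζ) = 6(2ζ² − λ²) and the density of states u(μ) = μ/(π·√(λ² − μ²)) of the genus-0 soliton condensate satisfy the equation of state of the KdV soliton gas: 6(2η² − λ²) = 4η² + (1/η)·∫₀^λ ln((η + μ)/|η − μ|) · (μ/(π·√(λ² − μ²))) · (6(2η² − λ²) − 6(2μ² − λ²)) dμ. -/
/-!
The integrand has an explicit primitive. Write `s = √(λ² - μ²)`, `a = √(λ² - η²)`, so that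
`η² - μ² = s² - a²`. Then `D = -(s - a)² (s + 2a) / 3` is the primitive of `μ (η² - μ²) / s` that
vanishes to second order at `μ = η`. Integrating by parts against
`log ((η + μ) / |η - μ|)`, whose derivative is `2η / (η² - μ²)`, leaves the regular integrand
`(2η/3) (s - 2a² / (s + a))`, which is elementary: the only nontrivial part is
`∫ dμ / (s (s + a)) = η⁻¹ log (λ (η + μ) / (η s + a μ))`.

The resulting primitive `condensatePrimitive` is continuous on `[0, λ]` (the double zero of `D`
absorbs the logarithm at `μ = η`) and differentiable in the interior away from `η`. On each of
`[0, η]` and `[η, λ]` the integrand has constant sign, so integrability comes for free and the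
fundamental theorem of calculus applies on both pieces. At `μ = λ` the logarithms cancel because
`log ((λ + η) / (λ - η)) = 2 log ((λ + η) / a)`.
-/

open Real Set

/-- The integrand of the equation of state without the constant factor `12 / π`; the absolute value
inside the logarithm is implicit in the convention `Real.log (-x) = Real.log x`. -/
noncomputable def condensateIntegrand (lam η μ : ℝ) : ℝ :=
  (log (η + μ) - log (η - μ)) * (μ * (η ^ 2 - μ ^ 2) / √(lam ^ 2 - μ ^ 2))

/-- An explicit primitive of `condensateIntegrand` on `[0, lam]`. -/
noncomputable def condensatePrimitive (lam η μ : ℝ) : ℝ :=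
  (log (η + μ) - log (η - μ)) *
      (-((√(lam ^ 2 - μ ^ 2) - √(lam ^ 2 - η ^ 2)) ^ 2 *
        (√(lam ^ 2 - μ ^ 2) + 2 * √(lam ^ 2 - η ^ 2))) / 3) +
    (2 * η / 3) * ((μ * √(lam ^ 2 - μ ^ 2) + lam ^ 2 * arcsin (μ / lam)) / 2 -
      2 * √(lam ^ 2 - η ^ 2) ^ 2 * (arcsin (μ / lam) - √(lam ^ 2 - η ^ 2) / η *
        (log (lam * (η + μ)) - log (η * √(lam ^ 2 - μ ^ 2) + √(lam ^ 2 - η ^ 2) * μ))))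

lemma hasDerivAt_arcsin_div_s6 {lam μ : ℝ} (hl : 0 < lam) (h0 : 0 < μ) (h1 : μ < lam) :
    HasDerivAt (fun x => arcsin (x / lam)) (1 / √(lam ^ 2 - μ ^ 2)) μ := by
  have hlt : μ / lam < 1 := (div_lt_one hl).2 h1
  have hpos : 0 < μ / lam := by positivity
  have h := (hasDerivAt_arcsin (x := μ / lam) (by linarith) hlt.ne).comp μ
    ((hasDerivAt_id μ).div_const lam)
  refine h.congr_deriv ?_
  have : √(lam ^ 2 - μ ^ 2) = lam * √(1 - (μ / lam) ^ 2) := by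
    rw [← sqrt_sq hl.le, ← sqrt_mul (by positivity), sqrt_sq hl.le]
    congr 1
    field_simp
  rw [this]
  have : 0 < √(1 - (μ / lam) ^ 2) := sqrt_pos.2 (by nlinarith)
  field_simp

lemma hasDerivAt_sqrt_sub_sq {lam μ : ℝ} (h0 : 0 < μ) (h1 : μ < lam) :
    HasDerivAt (fun x => √(lam ^ 2 - x ^ 2)) (-μ / √(lam ^ 2 - μ ^ 2)) μ := by
  have hp : 0 < lam ^ 2 - μ ^ 2 := by nlinarith
  have h := (((hasDerivAt_id μ).pow 2).const_sub (lam ^ 2)).sqrt hp.ne'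
  refine h.congr_deriv ?_
  have := sqrt_pos.2 hp
  simp
  field_simp

lemma hasDerivAt_condensatePrimitive {lam η μ : ℝ} (hη0 : 0 < η) (hηl : η < lam)
    (h0 : 0 < μ) (h1 : μ < lam) (hne : μ ≠ η) :
    HasDerivAt (condensatePrimitive lam η) (condensateIntegrand lam η μ) μ := by
  have hl : 0 < lam := hη0.trans hηl
  have hS := hasDerivAt_sqrt_sub_sq h0 h1
  have hA := hasDerivAt_arcsin_div_s6 hl h0 h1
  have hs0 : 0 < √(lam ^ 2 - μ ^ 2) := sqrt_pos.2 (by nlinarith)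
  have ha0 : 0 < √(lam ^ 2 - η ^ 2) := sqrt_pos.2 (by nlinarith)
  have hs2 : √(lam ^ 2 - μ ^ 2) ^ 2 = lam ^ 2 - μ ^ 2 := sq_sqrt (by nlinarith)
  have ha2 : √(lam ^ 2 - η ^ 2) ^ 2 = lam ^ 2 - η ^ 2 := sq_sqrt (by nlinarith)
  unfold condensatePrimitive condensateIntegrand
  generalize √(lam ^ 2 - η ^ 2) = a at *
  have hm : η - μ ≠ 0 := sub_ne_zero.2 hne.symm
  have hp : 0 < η + μ := by positivity
  have hq : 0 < η * √(lam ^ 2 - μ ^ 2) + a * μ := by positivity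
  have hid := hasDerivAt_id μ
  have hL1 := (hid.const_add η).log hp.ne'
  have hL2 := (hid.const_sub η).log hm
  have hL3 := ((hid.const_add η).const_mul lam).log (mul_pos hl hp).ne'
  have hL4 := ((hS.const_mul η).add (hid.const_mul a)).log hq.ne'
  have hD := ((((hS.sub_const a).pow 2).mul (hS.add_const (2 * a))).neg).div_const 3
  have hT := (((hid.mul hS).add (hA.const_mul (lam ^ 2))).div_const 2).sub
    ((hA.sub ((hL3.sub hL4).const_mul (a / η))).const_mul (2 * a ^ 2))
  have hH := ((hL1.sub hL2).mul hD).add (hT.const_mul (2 * η / 3))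
  refine hH.congr_deriv ?_
  simp only [id, Pi.sub_apply, Pi.add_apply, Pi.mul_apply, Pi.neg_apply, Pi.pow_apply]
  generalize √(lam ^ 2 - μ ^ 2) = s at *
  have hsa : 0 < s + a := by positivity
  have hfac : (s - a) * (s + a) = (η - μ) * (η + μ) := by linear_combination hs2 - ha2
  -- `log (λ (η + μ) / (η s + a μ))` is `η` times a primitive of `1 / (s (s + a))`
  have hK : lam * 1 / (lam * (η + μ)) - (η * (-μ / s) + a * 1) / (η * s + a * μ)
      = η / (s * (s + a)) := by
    field_simp
    linear_combination η * s * (hs2 - ha2)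
  have hR : (1 / (η + μ) - -1 / (η - μ)) * (-((s - a) ^ 2 * (s + 2 * a)) / 3)
      = -(2 * η / 3) * (s - 2 * a ^ 2 / (s + a)) := by
    field_simp
    linear_combination -2 * η * (s - a) * (s + 2 * a) * hfac
  have hC : (lam ^ 2 : ℝ) = s ^ 2 + μ ^ 2 := by linarith
  have hE : η ^ 2 - μ ^ 2 = s ^ 2 - a ^ 2 := by linarith
  rw [hK, hR, hE, hC]
  field_simp
  ring

lemma continuousOn_condensatePrimitive {lam η : ℝ} (hη0 : 0 < η) (hηl : η < lam) :
    ContinuousOn (condensatePrimitive lam η) (Icc 0 lam) := by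
  have hl : 0 < lam := hη0.trans hηl
  have ha0 : 0 < √(lam ^ 2 - η ^ 2) := sqrt_pos.2 (by nlinarith)
  have ha2 : √(lam ^ 2 - η ^ 2) ^ 2 = lam ^ 2 - η ^ 2 := sq_sqrt (by nlinarith)
  unfold condensatePrimitive
  generalize √(lam ^ 2 - η ^ 2) = a at *
  have hpos : ∀ x ∈ Icc 0 lam, η * √(lam ^ 2 - x ^ 2) + a * x ≠ 0 := by
    intro x hx
    rcases hx.1.eq_or_lt with rfl | h
    · have : 0 < √(lam ^ 2 - 0 ^ 2) := sqrt_pos.2 (by nlinarith)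
      positivity
    · positivity
  have hp : ∀ x ∈ Icc 0 lam, η + x ≠ 0 := fun x hx => by linarith [hx.1]
  have hp' : ∀ x ∈ Icc 0 lam, lam * (η + x) ≠ 0 := fun x hx => mul_ne_zero hl.ne' (hp x hx)
  refine ContinuousOn.add ?_ ?_
  · -- `s - a = (η - μ) (η + μ) / (s + a)`, so `(s - a)²` turns `log (η - μ)` into `x log x`
    have hc : ContinuousOn (fun x : ℝ =>
        log (η + x) * (-((√(lam ^ 2 - x ^ 2) - a) ^ 2 * (√(lam ^ 2 - x ^ 2) + 2 * a)) / 3) +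
        ((η - x) * log (η - x)) * ((η - x) * (η + x) ^ 2 / (√(lam ^ 2 - x ^ 2) + a) ^ 2 *
          (√(lam ^ 2 - x ^ 2) + 2 * a) / 3)) (Icc 0 lam) := by
      have h1 : Continuous fun x : ℝ => (η - x) * log (η - x) :=
        continuous_mul_log.comp (continuous_const.sub continuous_id)
      have h2 : ∀ x ∈ Icc 0 lam, (√(lam ^ 2 - x ^ 2) + a) ^ 2 ≠ 0 := fun x _ => by positivity
      refine ContinuousOn.add (ContinuousOn.mul (ContinuousOn.log (by fun_prop) hp)
        (by fun_prop)) (h1.continuousOn.mul ?_)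
      exact ((ContinuousOn.div (by fun_prop) (by fun_prop) h2).mul (by fun_prop)).div_const 3
    refine hc.congr fun x hx => ?_
    have hs2 : √(lam ^ 2 - x ^ 2) ^ 2 = lam ^ 2 - x ^ 2 := sq_sqrt (by nlinarith [hx.1, hx.2])
    have hsn := sqrt_nonneg (lam ^ 2 - x ^ 2)
    simp only
    generalize √(lam ^ 2 - x ^ 2) = s at *
    have hsa : 0 < s + a := by positivity
    have hfac : (s - a) = (η - x) * (η + x) / (s + a) := by
      rw [eq_div_iff hsa.ne']
      linear_combination hs2 - ha2
    have : (s - a) ^ 2 = (η - x) * ((η - x) * (η + x) ^ 2 / (s + a) ^ 2) := by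
      rw [hfac]; field_simp
    rw [this]; ring
  · have h3 : ContinuousOn (fun x : ℝ => log (lam * (η + x))) (Icc 0 lam) :=
      ContinuousOn.log (by fun_prop) hp'
    have h4 : ContinuousOn (fun x : ℝ => log (η * √(lam ^ 2 - x ^ 2) + a * x)) (Icc 0 lam) :=
      ContinuousOn.log (by fun_prop) hpos
    have h5 : Continuous fun x : ℝ => arcsin (x / lam) :=
      continuous_arcsin.comp (continuous_id.div_const lam)
    fun_prop

lemma log_sub_log_nonneg {η μ : ℝ} (hη0 : 0 < η) (h0 : 0 ≤ μ) (hne : μ ≠ η) :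
    0 ≤ log (η + μ) - log (η - μ) := by
  rw [← log_abs (η - μ), sub_nonneg]
  refine log_le_log (abs_pos.2 (sub_ne_zero.2 hne.symm)) ?_
  rw [abs_le]; constructor <;> linarith

lemma integral_condensateIntegrand {lam η : ℝ} (hη0 : 0 < η) (hηl : η < lam) :
    ∫ μ in (0:ℝ)..lam, condensateIntegrand lam η μ =
      condensatePrimitive lam η lam - condensatePrimitive lam η 0 := by
  have hcont := continuousOn_condensatePrimitive hη0 hηl
  have hc1 : ContinuousOn (condensatePrimitive lam η) (uIcc 0 η) := by
    rw [uIcc_of_le hη0.le]; exact hcont.mono (Icc_subset_Icc_right hηl.le)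
  have hc2 : ContinuousOn (condensatePrimitive lam η) (uIcc η lam) := by
    rw [uIcc_of_le hηl.le]; exact hcont.mono (Icc_subset_Icc_left hη0.le)
  have hd1 : ∀ x ∈ Ioo 0 η,
      HasDerivAt (condensatePrimitive lam η) (condensateIntegrand lam η x) x := fun x hx =>
    hasDerivAt_condensatePrimitive hη0 hηl hx.1 (hx.2.trans hηl) hx.2.ne
  have hd2 : ∀ x ∈ Ioo η lam,
      HasDerivAt (condensatePrimitive lam η) (condensateIntegrand lam η x) x := fun x hx =>
    hasDerivAt_condensatePrimitive hη0 hηl (hη0.trans hx.1) hx.2 hx.1.ne'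
  have hi1 : IntervalIntegrable (condensateIntegrand lam η) MeasureTheory.volume 0 η := by
    refine intervalIntegral.intervalIntegrable_deriv_of_nonneg hc1 ?_ ?_
    · simpa [hη0.le] using hd1
    · intro x hx
      rw [min_eq_left hη0.le, max_eq_right hη0.le] at hx
      refine mul_nonneg (log_sub_log_nonneg hη0 hx.1.le hx.2.ne)
        (div_nonneg (mul_nonneg hx.1.le ?_) (sqrt_nonneg _))
      nlinarith [hx.1, hx.2]
  have hi2 : IntervalIntegrable (condensateIntegrand lam η) MeasureTheory.volume η lam := by
    have : IntervalIntegrable (fun x => -condensateIntegrand lam η x)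
        MeasureTheory.volume η lam := by
      refine intervalIntegral.intervalIntegrable_deriv_of_nonneg hc2.neg ?_ ?_
      · rw [min_eq_left hηl.le, max_eq_right hηl.le]
        exact fun x hx => (hd2 x hx).neg
      · intro x hx
        rw [min_eq_left hηl.le, max_eq_right hηl.le] at hx
        have hx0 : 0 < x := hη0.trans hx.1
        refine neg_nonneg.2 (mul_nonpos_of_nonneg_of_nonpos
          (log_sub_log_nonneg hη0 hx0.le hx.1.ne')
          (div_nonpos_of_nonpos_of_nonneg (mul_nonpos_of_nonneg_of_nonpos hx0.le ?_)
            (sqrt_nonneg _)))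
        nlinarith [hx.1, hx.2]
    exact (this.neg).congr fun x _ => neg_neg _
  rw [← intervalIntegral.integral_add_adjacent_intervals hi1 hi2,
    intervalIntegral.integral_eq_sub_of_hasDerivAt_of_le hη0.le (by rwa [uIcc_of_le hη0.le] at hc1)
      hd1 hi1,
    intervalIntegral.integral_eq_sub_of_hasDerivAt_of_le hηl.le (by rwa [uIcc_of_le hηl.le] at hc2)
      hd2 hi2]
  ring

lemma condensatePrimitive_zero {lam η : ℝ} (hη0 : 0 < η) (hηl : η < lam) :
    condensatePrimitive lam η 0 = 0 := by
  have hl : 0 < lam := hη0.trans hηl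
  simp [condensatePrimitive, sqrt_sq hl.le, mul_comm lam η]

lemma condensatePrimitive_lam {lam η : ℝ} (hη0 : 0 < η) (hηl : η < lam) :
    condensatePrimitive lam η lam = 2 * π * η / 3 * (η ^ 2 - 3 * lam ^ 2 / 4) := by
  have hl : 0 < lam := hη0.trans hηl
  have ha0 : 0 < √(lam ^ 2 - η ^ 2) := sqrt_pos.2 (by nlinarith)
  have ha2 : √(lam ^ 2 - η ^ 2) ^ 2 = lam ^ 2 - η ^ 2 := sq_sqrt (by nlinarith)
  have hlog : 2 * log √(lam ^ 2 - η ^ 2) = log (η + lam) + log (η - lam) := by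
    rw [← log_mul (by positivity) (by linarith), ← log_neg_eq_log ((η + lam) * _),
      log_sqrt (by nlinarith)]
    ring_nf
  unfold condensatePrimitive
  rw [log_mul hl.ne' (by positivity), sub_self, sqrt_zero, div_self hl.ne', arcsin_one,
    mul_zero, mul_zero, zero_add, zero_add, zero_add, log_mul ha0.ne' hl.ne',
    show log √(lam ^ 2 - η ^ 2) = (log (η + lam) + log (η - lam)) / 2 by linarith]
  generalize √(lam ^ 2 - η ^ 2) = a at *
  field_simp
  linear_combination -16 * η * π * ha2

/-- Equation of state of the KdV soliton gas for the genus-0 condensate: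
with `s(ζ) = 6(2ζ²-λ²)` and `u(μ) = μ/(π√(λ²-μ²))`,
`s(η) = 4η² + (1/η)·∫₀^λ ln((η+μ)/|η-μ|)·u(μ)·(s(η)-s(μ)) dμ` for `0 < η < λ`. -/
theorem genus0_condensate_equation_of_state (lam η : ℝ) (hlam : 0 < lam)
    (hη0 : 0 < η) (hηlam : η < lam) :
    6 * (2 * η ^ 2 - lam ^ 2) =
      4 * η ^ 2 + (1 / η) *
        ∫ μ in (0:ℝ)..lam,
          Real.log ((η + μ) / |η - μ|) * (μ / (Real.pi * Real.sqrt (lam ^ 2 - μ ^ 2))) *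
            (6 * (2 * η ^ 2 - lam ^ 2) - 6 * (2 * μ ^ 2 - lam ^ 2)) := by
  have hcongr : ∫ μ in (0:ℝ)..lam,
          Real.log ((η + μ) / |η - μ|) * (μ / (Real.pi * Real.sqrt (lam ^ 2 - μ ^ 2))) *
            (6 * (2 * η ^ 2 - lam ^ 2) - 6 * (2 * μ ^ 2 - lam ^ 2)) =
      ∫ μ in (0:ℝ)..lam, 12 / π * condensateIntegrand lam η μ := by
    refine intervalIntegral.integral_congr fun μ hμ => ?_
    rw [uIcc_of_le hlam.le] at hμ
    simp only [condensateIntegrand]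
    rcases eq_or_ne μ η with rfl | hne
    · simp
    · have h1 : η + μ ≠ 0 := by linarith [hμ.1]
      have h2 : |η - μ| ≠ 0 := abs_ne_zero.2 (sub_ne_zero.2 hne.symm)
      rw [log_div h1 h2, log_abs, div_mul_eq_div_div]
      ring
  rw [hcongr, intervalIntegral.integral_const_mul, integral_condensateIntegrand hη0 hηlam,
    condensatePrimitive_zero hη0 hηlam, condensatePrimitive_lam hη0 hηlam]
  have := pi_ne_zero
  field_simp
  ring
end
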